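/- Let n ≥ 1, let V : ℝⁿ → ℝ be bounded, continuous and satisfy V(x) > 0 for all x, and let u : [0,∞) × ℝⁿ → ℝ be a smooth solution of the heat equation with potential ∂ₜu − Δₓu + V·u = 0 with u(0,·) = u₀, such that u(t,·) is Schwartz-class in x, uniformly on compact time intervals. If ∫_{ℝⁿ} |u₀(x)|²/V(x) dx < ∞ and v(t,x) := ∫₀ᵗ u(s,x) ds, then for all t > 0: ∫₀ᵗ ‖u(s,·)‖² ds + ¼∫_{ℝⁿ} V(x)|v(t,x)|² dx ≤ ∫_{ℝⁿ} |u₀(x)|²/V(x) dx. -/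

import Mathlib

open MeasureTheory

noncomputable section

/-- The Laplacian of `f : ℝⁿ → ℝ`, as the sum of second derivatives in the
coordinate directions. -/
def lap {n : ℕ} (f : EuclideanSpace ℝ (Fin n) → ℝ) (x : EuclideanSpace ℝ (Fin n)) : ℝ :=
  ∑ i : Fin n, iteratedFDeriv ℝ 2 f x ![EuclideanSpace.single i 1, EuclideanSpace.single i 1]

/-!
The primitive `v` satisfies `∂ₜv - Δv + V v = u₀`. Testing this against `u = ∂ₜv` gives the energy
identity `∫₀ᵗ ‖u‖² + ½ ∫ V v(t)² + ½ ‖∇v(t)‖² = ∫ u₀ v(t)`, and Young's inequality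
`u₀ v ≤ u₀² / V + ¼ V v²` absorbs the right-hand side.

The identity is first derived at each fixed `x`, where it only involves functions of time, and then
integrated in `x`. The Laplacian term `∫₀ᵗ u ∫₀ˢ Δu` is treated by Fubini, so that only the
functions `u(s, ·)`, never `v`, have to be differentiated in space.
-/

section Primitive

open Set
open scoped RealInnerProductSpace

theorem integral_inner_primitive_self {F : Type*} [NormedAddCommGroup F] [InnerProductSpace ℝ F]
    [CompleteSpace F] {g : ℝ → F} (hg : Continuous g) (a b : ℝ) :
    ∫ s in a..b, ⟪g s, ∫ r in a..s, g r⟫ = ‖∫ s in a..b, g s‖ ^ 2 / 2 := by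
  have hderiv (s : ℝ) : HasDerivAt (fun s => ‖∫ r in a..s, g r‖ ^ 2 / 2)
      ⟪g s, ∫ r in a..s, g r⟫ s := by
    refine ((hg.integral_hasStrictDerivAt a s).hasDerivAt.norm_sq.div_const 2).congr_deriv ?_
    rw [real_inner_comm]
    ring
  have hcont : Continuous fun s => ⟪g s, ∫ r in a..s, g r⟫ := by fun_prop
  simpa using intervalIntegral.integral_eq_sub_of_hasDerivAt (fun s _ => hderiv s)
    (hcont.intervalIntegrable a b)

theorem integral_sq_add_eq_of_hasDerivAt {f g : ℝ → ℝ} {c a b : ℝ} (hf : Continuous f)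
    (hg : Continuous g) (hderiv : ∀ s ∈ uIcc a b, HasDerivAt f (g s - c * f s) s) :
    (∫ s in a..b, f s ^ 2) + c * (∫ s in a..b, f s) ^ 2 / 2
      = f a * (∫ s in a..b, f s) + ∫ s in a..b, f s * ∫ r in a..s, g r := by
  have hduhamel : ∀ s ∈ uIcc a b, f s = f a + (∫ r in a..s, g r) - c * ∫ r in a..s, f r := by
    intro s hs
    have hftc := intervalIntegral.integral_eq_sub_of_hasDerivAt
      (fun r hr => hderiv r (uIcc_subset_uIcc_left hs hr))
      ((by fun_prop : Continuous fun r => g r - c * f r).intervalIntegrable a s)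
    rw [intervalIntegral.integral_sub (hg.intervalIntegrable _ _)
      ((hf.const_mul c).intervalIntegrable _ _), intervalIntegral.integral_const_mul] at hftc
    linarith
  have hself : ∫ s in a..b, f s * ∫ r in a..s, f r = (∫ s in a..b, f s) ^ 2 / 2 := by
    simpa [mul_comm] using integral_inner_primitive_self hf a b
  have hint {h : ℝ → ℝ} (hh : Continuous h) : IntervalIntegrable h volume a b :=
    hh.intervalIntegrable a b
  calc (∫ s in a..b, f s ^ 2) + c * (∫ s in a..b, f s) ^ 2 / 2
      = (∫ s in a..b, (f a * f s + f s * (∫ r in a..s, g r) - c * (f s * ∫ r in a..s, f r)))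
          + c * (∫ s in a..b, f s) ^ 2 / 2 := by
        congr 1
        refine intervalIntegral.integral_congr fun s hs => ?_
        linear_combination f s * hduhamel s hs
    _ = _ := by
        rw [intervalIntegral.integral_sub (hint (by fun_prop)) (hint (by fun_prop)),
          intervalIntegral.integral_add (hint (by fun_prop)) (hint (by fun_prop)),
          intervalIntegral.integral_const_mul, intervalIntegral.integral_const_mul, hself]
        ring

end Primitive

section LpDominated

open Set Function
open scoped ENNReal RealInnerProductSpace

variable {X F G : Type*} [TopologicalSpace X] [MeasurableSpace X]
  [NormedAddCommGroup F] [NormedAddCommGroup G]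

/-- A jointly continuous time-dependent function whose values at all times in `I` are dominated by
a single `Lᵖ` function of the space variable. These are the families for which time and space
integrals may be interchanged. -/
structure IsLpDominated (p : ℝ≥0∞) (μ : Measure X) (I : Set ℝ) (g : ℝ → X → F) : Prop where
  continuous_uncurry : Continuous (uncurry g)
  exists_bound : ∃ b : X → ℝ, MemLp b p μ ∧ ∀ s ∈ I, ∀ x, ‖g s x‖ ≤ b x

namespace IsLpDominated

variable {p q r : ℝ≥0∞} {μ : Measure X} {I : Set ℝ} {a c s : ℝ} {g : ℝ → X → F} {h : ℝ → X → G}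

theorem continuous_time (hg : IsLpDominated p μ I g) (x : X) : Continuous fun s => g s x :=
  hg.continuous_uncurry.uncurry_right x

theorem continuous_space (hg : IsLpDominated p μ I g) (s : ℝ) : Continuous (g s) :=
  hg.continuous_uncurry.uncurry_left s

theorem const (hg : IsLpDominated p μ I g) (hs : s ∈ I) : IsLpDominated p μ I fun _ => g s := by
  obtain ⟨b, hb, hgb⟩ := hg.exists_bound
  exact ⟨(hg.continuous_space s).comp continuous_snd, b, hb, fun _ _ => hgb s hs⟩

theorem clm_comp [NormedSpace ℝ F] [NormedSpace ℝ G] (L : F →L[ℝ] G)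
    (hg : IsLpDominated p μ I g) : IsLpDominated p μ I fun s x => L (g s x) := by
  obtain ⟨b, hb, hgb⟩ := hg.exists_bound
  refine ⟨L.continuous.comp hg.continuous_uncurry, _, hb.const_mul ‖L‖, fun s hs x => ?_⟩
  exact L.le_opNorm_of_le (hgb s hs x)

theorem inner {g h : ℝ → X → F} [InnerProductSpace ℝ F] [ENNReal.HolderTriple p q r]
    (hg : IsLpDominated p μ I g) (hh : IsLpDominated q μ I h) :
    IsLpDominated r μ I fun s x => ⟪g s x, h s x⟫ := by
  obtain ⟨b, hb, hgb⟩ := hg.exists_bound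
  obtain ⟨d, hd, hhd⟩ := hh.exists_bound
  refine ⟨hg.continuous_uncurry.inner hh.continuous_uncurry, _, hd.mul hb, fun s hs x => ?_⟩
  exact (norm_inner_le_norm _ _).trans <| mul_le_mul (hgb s hs x) (hhd s hs x)
    (norm_nonneg _) ((norm_nonneg _).trans (hgb s hs x))

theorem mul {g h : ℝ → X → ℝ} [ENNReal.HolderTriple p q r] (hg : IsLpDominated p μ I g)
    (hh : IsLpDominated q μ I h) : IsLpDominated r μ I fun s x => g s x * h s x := by
  simpa [mul_comm] using hg.inner (r := r) hh

theorem primitive [FirstCountableTopology X] [NormedSpace ℝ F]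
    (hg : IsLpDominated p μ (uIcc a c) g) :
    IsLpDominated p μ (uIcc a c) fun s x => ∫ r in a..s, g r x := by
  obtain ⟨b, hb, hgb⟩ := hg.exists_bound
  have hcont : Continuous (uncurry fun (z : ℝ × X) r => g r z.2) :=
    hg.continuous_uncurry.comp (continuous_snd.prodMk (continuous_snd.comp continuous_fst))
  refine ⟨intervalIntegral.continuous_parametric_intervalIntegral_of_continuous hcont
    continuous_fst, _, hb.const_mul |c - a|, fun s hs x => ?_⟩
  calc ‖∫ r in a..s, g r x‖ ≤ b x * |s - a| :=
        intervalIntegral.norm_integral_le_of_norm_le_const fun r hr =>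
          hgb r (uIcc_subset_uIcc_left hs (uIoc_subset_uIcc hr)) x
    _ ≤ |c - a| * b x := by
        rw [mul_comm]
        exact mul_le_mul_of_nonneg_right (abs_sub_left_of_mem_uIcc hs)
          ((norm_nonneg _).trans (hgb s hs x))

variable [OpensMeasurableSpace X] [SecondCountableTopology X]

theorem memLp (hg : IsLpDominated p μ I g) (hs : s ∈ I) : MemLp (g s) p μ := by
  obtain ⟨b, hb, hgb⟩ := hg.exists_bound
  exact hb.mono' (hg.continuous_space s).aestronglyMeasurable (.of_forall (hgb s hs))

theorem integrable (hg : IsLpDominated 1 μ I g) (hs : s ∈ I) : Integrable (g s) μ :=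
  memLp_one_iff_integrable.1 (hg.memLp hs)

variable [SFinite μ]

theorem intervalIntegral_integral_swap [NormedSpace ℝ F] (hg : IsLpDominated 1 μ I g)
    (hI : uIcc a c ⊆ I) :
    ∫ s in a..c, ∫ x, g s x ∂μ = ∫ x, (∫ s in a..c, g s x) ∂μ := by
  obtain ⟨b, hb, hgb⟩ := hg.exists_bound
  have : IsFiniteMeasure (volume.restrict (uIoc a c)) := by
    rw [uIoc]
    infer_instance
  have htime : ∀ᵐ z ∂(volume.restrict (uIoc a c)).prod μ, z.1 ∈ uIoc a c :=
    Measure.quasiMeasurePreserving_fst.ae (ae_restrict_mem measurableSet_uIoc)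
  refine MeasureTheory.intervalIntegral_integral_swap <|
    ((memLp_one_iff_integrable.1 hb).comp_snd _).mono'
      hg.continuous_uncurry.aestronglyMeasurable ?_
  filter_upwards [htime] with z hz using hgb z.1 (hI (uIoc_subset_uIcc hz)) z.2

theorem integral_inner_primitive {g h : ℝ → X → F} [InnerProductSpace ℝ F] [CompleteSpace F]
    (hg : IsLpDominated 2 μ (uIcc a c) g) (hh : IsLpDominated 2 μ (uIcc a c) h) :
    ∫ x, (∫ s in a..c, ⟪g s x, ∫ r in a..s, h r x⟫) ∂μ
      = ∫ s in a..c, ∫ r in a..s, ∫ x, ⟪g s x, h r x⟫ ∂μ := by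
  rw [← (hg.inner (r := 1) hh.primitive).intervalIntegral_integral_swap subset_rfl]
  refine intervalIntegral.integral_congr fun s hs => ?_
  rw [((hg.const hs).inner (r := 1) hh).intervalIntegral_integral_swap
    (uIcc_subset_uIcc_left hs)]
  refine integral_congr_ae (.of_forall fun x => ?_)
  exact ((innerSL ℝ (g s x)).intervalIntegral_comp_comm
    ((hh.continuous_time x).intervalIntegrable a s)).symm

end IsLpDominated

end LpDominated

theorem memLp_clm_apply {X E F : Type*} [MeasurableSpace X] [NormedAddCommGroup E]
    [NormedSpace ℝ E] [NormedAddCommGroup F] [NormedSpace ℝ F] {p : ENNReal} {μ : Measure X}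
    {L : X → E →L[ℝ] F} (hL : MemLp L p μ) (e : E) : MemLp (fun x => L x e) p μ :=
  (ContinuousLinearMap.apply ℝ F e).comp_memLp' hL

section Green

open InnerProductSpace Laplacian
open scoped Gradient RealInnerProductSpace

variable {E : Type*} [NormedAddCommGroup E] [InnerProductSpace ℝ E] [FiniteDimensional ℝ E]

variable (E) in
/-- The trace, with respect to the inner product, of a continuous bilinear form. It expresses the
Laplacian as a continuous linear function of the second derivative. -/
def bilinearTrace : (E →L[ℝ] E →L[ℝ] ℝ) →L[ℝ] ℝ :=
  ∑ i, ContinuousLinearMap.apply ℝ ℝ (stdOrthonormalBasis ℝ E i) ∘L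
    ContinuousLinearMap.apply ℝ (E →L[ℝ] ℝ) (stdOrthonormalBasis ℝ E i)

theorem bilinearTrace_apply (B : E →L[ℝ] E →L[ℝ] ℝ) :
    bilinearTrace E B = ∑ i, B (stdOrthonormalBasis ℝ E i) (stdOrthonormalBasis ℝ E i) := by
  simp [bilinearTrace]

theorem laplacian_eq_bilinearTrace (f : E → ℝ) (x : E) :
    (Δ f) x = bilinearTrace E (fderiv ℝ (fderiv ℝ f) x) := by
  simp [laplacian_eq_iteratedFDeriv_stdOrthonormalBasis, iteratedFDeriv_two_apply,
    bilinearTrace_apply]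

theorem inner_gradient_gradient_eq_sum (f g : E → ℝ) (x : E) :
    ⟪∇ f x, ∇ g x⟫ = ∑ i, fderiv ℝ f x (stdOrthonormalBasis ℝ E i)
      * fderiv ℝ g x (stdOrthonormalBasis ℝ E i) := by
  rw [← (stdOrthonormalBasis ℝ E).sum_inner_mul_inner]
  simp

variable [MeasurableSpace E] [BorelSpace E] {μ : Measure E} [μ.IsAddHaarMeasure]

variable {f g : E → ℝ}

theorem integral_mul_fderiv_fderiv_apply (hf : Differentiable ℝ f) (hg : ContDiff ℝ 2 g)
    (hf₀ : MemLp f 2 μ) (hf₁ : MemLp (fderiv ℝ f) 2 μ) (hg₁ : MemLp (fderiv ℝ g) 2 μ)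
    (hg₂ : MemLp (fderiv ℝ (fderiv ℝ g)) 2 μ) (e : E) :
    ∫ x, f x * fderiv ℝ (fderiv ℝ g) x e e ∂μ = -∫ x, fderiv ℝ f x e * fderiv ℝ g x e ∂μ := by
  have hdiff : Differentiable ℝ (fderiv ℝ g) :=
    (hg.fderiv_right (m := 1) le_rfl).differentiable one_ne_zero
  have hsecond (x : E) :
      fderiv ℝ (fun y => fderiv ℝ g y e) x e = fderiv ℝ (fderiv ℝ g) x e e := by
    simp [fderiv_clm_apply (hdiff x) (differentiableAt_const e)]
  have hg₁e := memLp_clm_apply hg₁ e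
  simp only [← hsecond]
  refine integral_mul_fderiv_eq_neg_fderiv_mul_of_integrable
    ((memLp_clm_apply hf₁ e).integrable_mul hg₁e) ?_ (hf₀.integrable_mul hg₁e)
    (fun x _ => hf x) (fun x _ => (hdiff x).clm_apply (differentiableAt_const e))
  simp only [hsecond]
  exact hf₀.integrable_mul (memLp_clm_apply (memLp_clm_apply hg₂ e) e)

theorem integral_mul_laplacian_eq_neg_integral_inner_gradient (hf : Differentiable ℝ f)
    (hg : ContDiff ℝ 2 g) (hf₀ : MemLp f 2 μ) (hf₁ : MemLp (fderiv ℝ f) 2 μ)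
    (hg₁ : MemLp (fderiv ℝ g) 2 μ) (hg₂ : MemLp (fderiv ℝ (fderiv ℝ g)) 2 μ) :
    ∫ x, f x * (Δ g) x ∂μ = -∫ x, ⟪∇ f x, ∇ g x⟫ ∂μ := by
  simp only [laplacian_eq_bilinearTrace, bilinearTrace_apply, Finset.mul_sum,
    inner_gradient_gradient_eq_sum]
  rw [integral_finsetSum, integral_finsetSum, ← Finset.sum_neg_distrib]
  · exact Finset.sum_congr rfl fun i _ =>
      integral_mul_fderiv_fderiv_apply hf hg hf₀ hf₁ hg₁ hg₂ _
  · exact fun i _ => (memLp_clm_apply hf₁ _).integrable_mul (memLp_clm_apply hg₁ _)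
  · exact fun i _ => hf₀.integrable_mul (memLp_clm_apply (memLp_clm_apply hg₂ _) _)

end Green

section H2Dominated

open Function

variable {E : Type*} [NormedAddCommGroup E] [NormedSpace ℝ E] [MeasurableSpace E]

/-- A `C²` function of time and space which, together with its space derivatives of order at most
two, is dominated in `L²` uniformly for times in `I`: a uniform-in-time form of membership in the
Sobolev space `H²`. -/
structure IsH2Dominated (μ : Measure E) (I : Set ℝ) (u : ℝ → E → ℝ) : Prop where
  contDiff : ContDiff ℝ 2 (uncurry u)
  exists_bound : ∀ m ≤ 2, ∃ b : E → ℝ, MemLp b 2 μ ∧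
    ∀ s ∈ I, ∀ x, ‖iteratedFDeriv ℝ m (u s) x‖ ≤ b x

namespace IsH2Dominated

variable {μ : Measure E} {I : Set ℝ} {u : ℝ → E → ℝ}

theorem contDiff_space (hu : IsH2Dominated μ I u) (s : ℝ) : ContDiff ℝ 2 (u s) :=
  hu.contDiff.comp (contDiff_const.prodMk contDiff_id)

theorem differentiable_time (hu : IsH2Dominated μ I u) (x : E) :
    Differentiable ℝ fun s => u s x :=
  (hu.contDiff.comp (contDiff_id.prodMk contDiff_const)).differentiable two_ne_zero

theorem isLpDominated (hu : IsH2Dominated μ I u) : IsLpDominated 2 μ I u where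
  continuous_uncurry := hu.contDiff.continuous
  exists_bound := by simpa using hu.exists_bound 0 (by simp)

theorem contDiff_fderiv (hu : IsH2Dominated μ I u) :
    ContDiff ℝ 1 (uncurry fun s => fderiv ℝ (u s)) :=
  ContDiff.fderiv (f := fun (z : ℝ × E) => u z.1) (g := Prod.snd) (m := 2)
    (hu.contDiff.comp ((contDiff_fst.comp contDiff_fst).prodMk contDiff_snd)) contDiff_snd le_rfl

theorem isLpDominated_fderiv (hu : IsH2Dominated μ I u) :
    IsLpDominated 2 μ I fun s => fderiv ℝ (u s) where
  continuous_uncurry := hu.contDiff_fderiv.continuous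
  exists_bound := by simpa only [norm_iteratedFDeriv_one] using hu.exists_bound 1 (by simp)

theorem isLpDominated_fderiv_fderiv (hu : IsH2Dominated μ I u) :
    IsLpDominated 2 μ I fun s => fderiv ℝ (fderiv ℝ (u s)) where
  continuous_uncurry := by
    refine (ContDiff.fderiv (f := fun (z : ℝ × E) => fderiv ℝ (u z.1)) (g := Prod.snd) (m := 1)
      (n := 0) ?_ contDiff_snd le_rfl).continuous
    exact hu.contDiff_fderiv.comp ((contDiff_fst.comp contDiff_fst).prodMk contDiff_snd)
  exists_bound := by
    simpa only [← norm_iteratedFDeriv_fderiv (n := 1), norm_iteratedFDeriv_one] using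
      hu.exists_bound 2 le_rfl

end IsH2Dominated

end H2Dominated

section Energy

open Set InnerProductSpace Laplacian
open scoped Gradient RealInnerProductSpace

variable {E : Type*} [NormedAddCommGroup E] [InnerProductSpace ℝ E] [FiniteDimensional ℝ E]
  [MeasurableSpace E] {μ : Measure E} {I : Set ℝ} {a b : ℝ} {u : ℝ → E → ℝ} {V : E → ℝ}

namespace IsH2Dominated

theorem isLpDominated_gradient (hu : IsH2Dominated μ I u) :
    IsLpDominated 2 μ I fun s => ∇ (u s) where
  continuous_uncurry :=
    (toDual ℝ E).symm.continuous.comp hu.isLpDominated_fderiv.continuous_uncurry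
  exists_bound := by
    simpa only [gradient, LinearIsometryEquiv.norm_map] using hu.isLpDominated_fderiv.exists_bound

theorem isLpDominated_laplacian (hu : IsH2Dominated μ I u) :
    IsLpDominated 2 μ I fun s => Δ (u s) := by
  simp only [funext (laplacian_eq_bilinearTrace _)]
  exact hu.isLpDominated_fderiv_fderiv.clm_comp (bilinearTrace E)

theorem integral_sq_add_potential_eq (hu : IsH2Dominated μ (uIcc a b) u) {x : E}
    (hPDE : ∀ s ∈ uIcc a b, deriv (fun r => u r x) s - (Δ (u s)) x + V x * u s x = 0) :
    (∫ s in a..b, u s x ^ 2) + V x * (∫ s in a..b, u s x) ^ 2 / 2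
      = u a x * (∫ s in a..b, u s x) + ∫ s in a..b, u s x * ∫ r in a..s, (Δ (u r)) x :=
  integral_sq_add_eq_of_hasDerivAt (hu.isLpDominated.continuous_time x)
    (hu.isLpDominated_laplacian.continuous_time x) fun s hs =>
      (hu.differentiable_time x s).hasDerivAt.congr_deriv (by linarith [hPDE s hs])

variable [BorelSpace E]

theorem integrable_integral_sq (hu : IsH2Dominated μ (uIcc a b) u) :
    Integrable (fun x => ∫ s in a..b, u s x ^ 2) μ := by
  simpa only [sq] using (hu.isLpDominated.mul (r := 1) hu.isLpDominated).primitive.integrable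
    right_mem_uIcc

theorem integrable_mul_integral (hu : IsH2Dominated μ (uIcc a b) u) :
    Integrable (fun x => u a x * ∫ s in a..b, u s x) μ :=
  ((hu.isLpDominated.const left_mem_uIcc).mul hu.isLpDominated.primitive).integrable
    right_mem_uIcc

theorem integrable_integral_mul_primitive_laplacian (hu : IsH2Dominated μ (uIcc a b) u) :
    Integrable (fun x => ∫ s in a..b, u s x * ∫ r in a..s, (Δ (u r)) x) μ :=
  (hu.isLpDominated.mul (r := 1) hu.isLpDominated_laplacian.primitive).primitive.integrable
    right_mem_uIcc

theorem integrable_potential_mul_sq (hu : IsH2Dominated μ (uIcc a b) u)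
    (hPDE : ∀ s ∈ uIcc a b, ∀ x, deriv (fun r => u r x) s - (Δ (u s)) x + V x * u s x = 0) :
    Integrable (fun x => V x * (∫ s in a..b, u s x) ^ 2) μ := by
  refine (((hu.integrable_mul_integral.add hu.integrable_integral_mul_primitive_laplacian).sub
    hu.integrable_integral_sq).const_mul 2).congr (.of_forall fun x => ?_)
  have := hu.integral_sq_add_potential_eq fun s hs => hPDE s hs x
  simp only [Pi.add_apply, Pi.sub_apply]
  linarith

variable [μ.IsAddHaarMeasure]

theorem integral_mul_laplacian (hu : IsH2Dominated μ I u) {s r : ℝ}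
    (hs : s ∈ I) (hr : r ∈ I) :
    ∫ x, u s x * (Δ (u r)) x ∂μ = -∫ x, ⟪∇ (u s) x, ∇ (u r) x⟫ ∂μ :=
  integral_mul_laplacian_eq_neg_integral_inner_gradient
    ((hu.contDiff_space s).differentiable two_ne_zero) (hu.contDiff_space r)
    (hu.isLpDominated.memLp hs) (hu.isLpDominated_fderiv.memLp hs)
    (hu.isLpDominated_fderiv.memLp hr) (hu.isLpDominated_fderiv_fderiv.memLp hr)

theorem integral_mul_primitive_laplacian (hu : IsH2Dominated μ (uIcc a b) u) :
    ∫ x, (∫ s in a..b, u s x * ∫ r in a..s, (Δ (u r)) x) ∂μ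
      = -(∫ x, ‖∫ s in a..b, ∇ (u s) x‖ ^ 2 ∂μ) / 2 := by
  have hgradient := hu.isLpDominated_gradient.integral_inner_primitive hu.isLpDominated_gradient
  calc ∫ x, (∫ s in a..b, u s x * ∫ r in a..s, (Δ (u r)) x) ∂μ
      = ∫ s in a..b, ∫ r in a..s, ∫ x, u s x * (Δ (u r)) x ∂μ := by
        simpa [mul_comm] using
          hu.isLpDominated.integral_inner_primitive hu.isLpDominated_laplacian
    _ = ∫ s in a..b, ∫ r in a..s, -∫ x, ⟪∇ (u s) x, ∇ (u r) x⟫ ∂μ :=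
        intervalIntegral.integral_congr fun s hs => intervalIntegral.integral_congr fun r hr =>
          hu.integral_mul_laplacian hs (uIcc_subset_uIcc_left hs hr)
    _ = -∫ x, (∫ s in a..b, ⟪∇ (u s) x, ∫ r in a..s, ∇ (u r) x⟫) ∂μ := by
        simp only [hgradient, intervalIntegral.integral_neg]
    _ = _ := by
        simp only [integral_inner_primitive_self (hu.isLpDominated_gradient.continuous_time _),
          integral_div, neg_div]

theorem energy_identity (hu : IsH2Dominated μ (uIcc a b) u)
    (hPDE : ∀ s ∈ uIcc a b, ∀ x, deriv (fun r => u r x) s - (Δ (u s)) x + V x * u s x = 0) :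
    (∫ s in a..b, ∫ x, u s x ^ 2 ∂μ) + (∫ x, V x * (∫ s in a..b, u s x) ^ 2 ∂μ) / 2
        + (∫ x, ‖∫ s in a..b, ∇ (u s) x‖ ^ 2 ∂μ) / 2
      = ∫ x, u a x * (∫ s in a..b, u s x) ∂μ := by
  have hfubini : ∫ s in a..b, ∫ x, u s x ^ 2 ∂μ = ∫ x, (∫ s in a..b, u s x ^ 2) ∂μ := by
    simpa only [sq] using
      (hu.isLpDominated.mul (r := 1) hu.isLpDominated).intervalIntegral_integral_swap subset_rfl
  have hspace := integral_congr_ae (μ := μ) <| .of_forall fun x =>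
    hu.integral_sq_add_potential_eq fun s hs => hPDE s hs x
  rw [integral_add hu.integrable_integral_sq ((hu.integrable_potential_mul_sq hPDE).div_const 2),
    integral_add hu.integrable_mul_integral hu.integrable_integral_mul_primitive_laplacian,
    integral_div, hu.integral_mul_primitive_laplacian] at hspace
  linarith

end IsH2Dominated

theorem mul_le_sq_div_add_mul_sq {c : ℝ} (hc : 0 < c) (y z : ℝ) :
    y * z ≤ y ^ 2 / c + 1 / 4 * (c * z ^ 2) := by
  have hsquare : y ^ 2 / c + 1 / 4 * (c * z ^ 2) - y * z = (y - c * z / 2) ^ 2 / c := by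
    field_simp
    ring
  have : 0 ≤ (y - c * z / 2) ^ 2 / c := by positivity
  linarith

theorem heat_potential_primitive_estimate_general [BorelSpace E] [μ.IsAddHaarMeasure] {t : ℝ}
    (hV : ∀ x, 0 < V x) (hu : IsH2Dominated μ (uIcc 0 t) u)
    (hPDE : ∀ s ∈ uIcc 0 t, ∀ x, deriv (fun r => u r x) s - (Δ (u s)) x + V x * u s x = 0)
    (hK : Integrable (fun x => u 0 x ^ 2 / V x) μ) :
    (∫ s in 0..t, ∫ x, u s x ^ 2 ∂μ) + 1 / 4 * (∫ x, V x * (∫ s in 0..t, u s x) ^ 2 ∂μ)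
      ≤ ∫ x, u 0 x ^ 2 / V x ∂μ := by
  have hpotential := (hu.integrable_potential_mul_sq hPDE).const_mul (1 / 4)
  have hyoung : ∫ x, u 0 x * (∫ s in 0..t, u s x) ∂μ ≤ ∫ x, u 0 x ^ 2 / V x ∂μ
      + 1 / 4 * ∫ x, V x * (∫ s in 0..t, u s x) ^ 2 ∂μ := by
    rw [← integral_const_mul, ← integral_add hK hpotential]
    exact integral_mono hu.integrable_mul_integral (hK.add hpotential) fun x =>
      mul_le_sq_div_add_mul_sq (hV x) _ _
  have hgradient : 0 ≤ ∫ x, ‖∫ s in 0..t, ∇ (u s) x‖ ^ 2 ∂μ :=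
    integral_nonneg fun x => sq_nonneg _
  linarith [hu.energy_identity hPDE]

end Energy

section Decay

open Module
open scoped ENNReal

variable {E : Type*} [NormedAddCommGroup E] [NormedSpace ℝ E] [FiniteDimensional ℝ E]
  [MeasurableSpace E] [BorelSpace E] {μ : Measure E} [μ.IsAddHaarMeasure]

theorem memLp_one_add_norm_rpow_neg {p : ℝ≥0∞} {r : ℝ} (hr : finrank ℝ E < r * p.toReal) :
    MemLp (fun x : E => (1 + ‖x‖) ^ (-r)) p μ := by
  obtain ⟨hp₀, hp⟩ : p ≠ 0 ∧ p ≠ ∞ := by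
    rw [← ENNReal.toReal_ne_zero]
    intro hp
    rw [hp, mul_zero] at hr
    exact (Nat.cast_nonneg _).not_gt hr
  rw [← integrable_norm_rpow_iff (Measurable.aestronglyMeasurable (by fun_prop)) hp₀ hp]
  refine (integrable_one_add_norm hr).congr (.of_forall fun x => ?_)
  have hbase : 0 ≤ 1 + ‖x‖ := by positivity
  simp only [Real.norm_of_nonneg (Real.rpow_nonneg hbase _), ← Real.rpow_mul hbase, neg_mul]

theorem exists_memLp_bound_of_forall_pow_mul_le {ι : Type*} {f : ι → E → ℝ} {p : ℝ≥0∞}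
    (hp₀ : p ≠ 0) (hp : p ≠ ∞) (hf₀ : ∀ i x, 0 ≤ f i x)
    (hf : ∀ k : ℕ, ∃ C, ∀ i x, ‖x‖ ^ k * f i x ≤ C) :
    ∃ b : E → ℝ, MemLp b p μ ∧ ∀ i x, f i x ≤ b x := by
  obtain ⟨k, hk⟩ := exists_nat_gt (finrank ℝ E / p.toReal)
  obtain ⟨C, hC⟩ := hf 0
  obtain ⟨D, hD⟩ := hf (0 + k)
  refine ⟨fun x => 2 ^ (k : ℝ) * (C + D) * (1 + ‖x‖) ^ (-(k : ℝ)),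
    (memLp_one_add_norm_rpow_neg ?_).const_mul _, fun i x => ?_⟩
  · exact (div_lt_iff₀ (ENNReal.toReal_pos hp₀ hp)).1 hk
  · simpa using pow_mul_le_of_le_of_pow_mul_le (norm_nonneg x) (hf₀ i x)
      (by simpa using hC i x) (hD i x)

theorem isH2Dominated_of_forall_pow_mul_le {u : ℝ → E → ℝ} {I : Set ℝ}
    (hu : ContDiff ℝ 2 (Function.uncurry u))
    (hdecay : ∀ k : ℕ, ∀ m ≤ 2, ∃ C, ∀ s ∈ I, ∀ x, ‖x‖ ^ k * ‖iteratedFDeriv ℝ m (u s) x‖ ≤ C) :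
    IsH2Dominated μ I u where
  contDiff := hu
  exists_bound m hm := by
    simpa using exists_memLp_bound_of_forall_pow_mul_le (μ := μ) (p := 2) two_ne_zero (by simp)
      (f := fun (s : I) x => ‖iteratedFDeriv ℝ m (u s) x‖) (fun _ _ => norm_nonneg _)
      (fun k => by simpa using hdecay k m hm)

end Decay

theorem lap_eq_laplacian {n : ℕ} (f : EuclideanSpace ℝ (Fin n) → ℝ) :
    lap f = Laplacian.laplacian f := by
  rw [InnerProductSpace.laplacian_eq_iteratedFDeriv_orthonormalBasis f
    (EuclideanSpace.basisFun (Fin n) ℝ)]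
  ext x
  simp [lap]

theorem heat_potential_primitive_estimate (n : ℕ) (hn : 1 ≤ n)
    (V : EuclideanSpace ℝ (Fin n) → ℝ)
    (hVcont : Continuous V) (hVbdd : ∃ M, ∀ x, |V x| ≤ M)
    (hVpos : ∀ x, 0 < V x)
    (u : ℝ → EuclideanSpace ℝ (Fin n) → ℝ)
    (u₀ : EuclideanSpace ℝ (Fin n) → ℝ)
    (hu : ContDiff ℝ (⊤ : ℕ∞) (fun p : ℝ × EuclideanSpace ℝ (Fin n) => u p.1 p.2))
    (hPDE : ∀ t, 0 ≤ t → ∀ x,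
      deriv (fun s => u s x) t - lap (u t) x + V x * u t x = 0)
    (hinit0 : ∀ x, u 0 x = u₀ x)
    (hSch : ∀ (k m : ℕ) (T : ℝ), 0 < T → ∃ C, ∀ t ∈ Set.Icc (0:ℝ) T, ∀ x,
      ‖x‖ ^ k * ‖iteratedFDeriv ℝ m (u t) x‖ ≤ C)
    (hK : Integrable (fun x => (u₀ x) ^ 2 / V x))
    (v : ℝ → EuclideanSpace ℝ (Fin n) → ℝ)
    (hv : ∀ t x, v t x = ∫ s in (0:ℝ)..t, u s x) :
    ∀ t, 0 < t →
      (∫ s in (0:ℝ)..t, ∫ x, (u s x) ^ 2)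
        + (1/4) * (∫ x, V x * (v t x) ^ 2)
      ≤ ∫ x, (u₀ x) ^ 2 / V x := by
  intro t ht
  have hH2 : IsH2Dominated volume (Set.uIcc 0 t) u :=
    isH2Dominated_of_forall_pow_mul_le (hu.of_le (WithTop.coe_le_coe.2 le_top)) fun k m _ =>
      Set.uIcc_of_le ht.le ▸ hSch k m t ht
  simp only [lap_eq_laplacian] at hPDE
  simp only [hv, ← hinit0] at hK ⊢
  exact heat_potential_primitive_estimate_general hVpos hH2
    (fun s hs => hPDE s (Set.uIcc_of_le ht.le ▸ hs).1) hK
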